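/- Let b ≥ 2 be an integer, let a = (a_j)_{j≥1} be a nondecreasing sequence of real weights, and let 1 < p < 2. Then the following three statements are equivalent: (a) liminf_{j→∞} a_j / j^{(p−1)/(2−p)} > 0; (b) there exist constants A, C, c > 0 such that e(n, s, W_{s,a}) ≤ C·exp(A·s)·exp(−c·(log n)^p) for all s, n ∈ ℕ; (c) there exist constants C, c > 0 such that e(n, s, W_{s,a}) ≤ C·exp(−c·(log n)^p) for all s, n ∈ ℕ. -/

import Mathlib

open MeasureTheory Matrix Filter
open scoped ENNReal BigOperators Topology

noncomputable section

/-- The `b`-adic digit of `k : ℕ` at place `b^i` (i.e. the `(i+1)`-st digit). -/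
def natDigit (b k i : ℕ) : ℕ := k / b ^ i % b

/-- The `(i+1)`-st `b`-adic digit of a real number `x ∈ [0,1)`
(using the expansion in which infinitely many digits differ from `b-1`). -/
def realDigit (b : ℕ) (x : ℝ) (i : ℕ) : ℕ := (⌊x * (b : ℝ) ^ (i + 1)⌋ % (b : ℤ)).toNat

/-- The `k`-th one-dimensional `b`-adic Walsh function. -/
def wal1 (b k : ℕ) (x : ℝ) : ℂ :=
  Complex.exp (2 * Real.pi * Complex.I / (b : ℂ) *
    ((∑ i ∈ Finset.range k, natDigit b k i * realDigit b x i : ℕ) : ℂ))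

/-- The `k`-th `s`-dimensional `b`-adic Walsh function. -/
def wal (b : ℕ) {s : ℕ} (k : Fin s → ℕ) (x : Fin s → ℝ) : ℂ :=
  ∏ j, wal1 b (k j) (x j)

/-- The unit cube `[0,1)^s`. -/
def unitCube (s : ℕ) : Set (Fin s → ℝ) := Set.univ.pi fun _ => Set.Ico (0 : ℝ) 1

/-- The `k`-th Walsh coefficient of `f`. -/
def walshCoeff (b : ℕ) {s : ℕ} (f : (Fin s → ℝ) → ℝ) (k : Fin s → ℕ) : ℂ :=
  ∫ x in unitCube s, (f x : ℂ) * (starRingEnd ℂ) (wal b k x)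

/-- The generalized Dick weight `μ_a(k)`, one-dimensional case. -/
def dickWt (b : ℕ) (a : ℝ) (k : ℕ) : ℝ :=
  ∑ i ∈ Finset.range k, if natDigit b k i ≠ 0 then ((i : ℝ) + 1 + a) else 0

/-- The generalized Dick weight `μ_a(k)` for vectors. -/
def dickWtV (b : ℕ) {s : ℕ} (a : Fin s → ℝ) (k : Fin s → ℕ) : ℝ :=
  ∑ j, dickWt b (a j) (k j)

/-- The modified Dick weight `μ'_a(k)`, one-dimensional case. -/
def mdickWt (b : ℕ) (a : ℝ) (k : ℕ) : ℝ :=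
  ∑ i ∈ Finset.range k, if natDigit b k i ≠ 0 then max ((i : ℝ) + 1 + a) 1 else 0

/-- The modified Dick weight `μ'_a(k)` for vectors. -/
def mdickWtV (b : ℕ) {s : ℕ} (a : Fin s → ℝ) (k : Fin s → ℕ) : ℝ :=
  ∑ j, mdickWt b (a j) (k j)

/-- Digitwise subtraction modulo `b` of natural numbers. -/
def dsub (b k k' : ℕ) : ℕ :=
  ∑ i ∈ Finset.range (k + k' + 1), ((natDigit b k i + (b - natDigit b k' i)) % b) * b ^ i

/-- The integral of `f` over the unit cube. -/
def intBox (s : ℕ) (f : (Fin s → ℝ) → ℝ) : ℝ := ∫ x in unitCube s, f x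

/-- Membership in the Walsh space `W_{s,a}`: `f` equals its (convergent) Walsh series
and has finite norm. -/
def MemW (b : ℕ) {s : ℕ} (a : Fin s → ℝ) (f : (Fin s → ℝ) → ℝ) : Prop :=
  (∀ x ∈ unitCube s, HasSum (fun k : Fin s → ℕ => walshCoeff b f k * wal b k x) ((f x : ℂ))) ∧
  BddAbove (Set.range fun k : Fin s → ℕ => ‖walshCoeff b f k‖ * (b : ℝ) ^ dickWtV b a k)

/-- The norm of the Walsh space `W_{s,a}`. -/
def normW (b : ℕ) {s : ℕ} (a : Fin s → ℝ) (f : (Fin s → ℝ) → ℝ) : ℝ :=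
  ⨆ k : Fin s → ℕ, ‖walshCoeff b f k‖ * (b : ℝ) ^ dickWtV b a k

/-- Membership in the modified Walsh space `W'_{s,a}`. -/
def MemW' (b : ℕ) {s : ℕ} (a : Fin s → ℝ) (f : (Fin s → ℝ) → ℝ) : Prop :=
  (∀ x ∈ unitCube s, HasSum (fun k : Fin s → ℕ => walshCoeff b f k * wal b k x) ((f x : ℂ))) ∧
  BddAbove (Set.range fun k : Fin s → ℕ => ‖walshCoeff b f k‖ * (b : ℝ) ^ mdickWtV b a k)

/-- The norm of the modified Walsh space `W'_{s,a}`. -/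
def normW' (b : ℕ) {s : ℕ} (a : Fin s → ℝ) (f : (Fin s → ℝ) → ℝ) : ℝ :=
  ⨆ k : Fin s → ℕ, ‖walshCoeff b f k‖ * (b : ℝ) ^ mdickWtV b a k

/-- The worst-case error of the algorithm `A` over the unit ball of `(H, N)`. -/
def worstErr (s : ℕ) (H : Set ((Fin s → ℝ) → ℝ)) (N : ((Fin s → ℝ) → ℝ) → ℝ)
    (A : ((Fin s → ℝ) → ℝ) → ℝ) : ℝ≥0∞ :=
  ⨆ (f : (Fin s → ℝ) → ℝ) (_ : f ∈ H) (_ : N f ≤ 1), ENNReal.ofReal |intBox s f - A f|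

/-- The `n`-th minimal worst-case error over all algorithms using `n` function values
at points of the unit cube. -/
def minErr (n s : ℕ) (H : Set ((Fin s → ℝ) → ℝ)) (N : ((Fin s → ℝ) → ℝ) → ℝ) : ℝ≥0∞ :=
  ⨅ (t : Fin n → Fin s → ℝ) (_ : ∀ i, t i ∈ unitCube s) (φ : (Fin n → ℝ) → ℝ),
    worstErr s H N fun f => φ fun i => f (t i)

/-- Partial derivative in the `j`-th coordinate. -/
def pd {s : ℕ} (j : Fin s) (f : (Fin s → ℝ) → ℝ) : (Fin s → ℝ) → ℝ :=
  fun x => deriv (fun t => f (Function.update x j t)) (x j)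

/-- The mixed partial derivative `f^{(α)}`. -/
def mpd {s : ℕ} (α : Fin s → ℕ) (f : (Fin s → ℝ) → ℝ) : (Fin s → ℝ) → ℝ :=
  (List.finRange s).foldr (fun j g => (pd j)^[α j] g) f

/-- Membership in the space `S_{s,u}` of smooth functions. -/
def MemS {s : ℕ} (u : Fin s → ℝ) (f : (Fin s → ℝ) → ℝ) : Prop :=
  ContDiff ℝ (⊤ : ℕ∞) f ∧
  BddAbove (Set.range fun α : Fin s → ℕ =>
    (∫ x in unitCube s, |mpd α f x|) / ∏ j, u j ^ α j)

/-- The norm of the space `S_{s,u}`. -/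
def normS {s : ℕ} (u : Fin s → ℝ) (f : (Fin s → ℝ) → ℝ) : ℝ :=
  ⨆ α : Fin s → ℕ, (∫ x in unitCube s, |mpd α f x|) / ∏ j, u j ^ α j

/-- The column vector of the first `m` `b`-adic digits of `k`. -/
def trunc (b m k : ℕ) : Fin m → ZMod b := fun i => (natDigit b k (i : ℕ) : ZMod b)

/-- The `m`-th point of the digital net determined by generating matrices `G`. -/
def netPoint (b : ℕ) {s l d : ℕ} (G : Fin s → Matrix (Fin l) (Fin d) (ZMod b)) (m : ℕ) :
    Fin s → ℝ :=
  fun j => ∑ i : Fin l, (((G j).mulVec (trunc b d m)) i).val / (b : ℝ) ^ ((i : ℕ) + 1)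

/-- The dual net of the digital net determined by `G`. -/
def dualNet (b : ℕ) {s l d : ℕ} (G : Fin s → Matrix (Fin l) (Fin d) (ZMod b)) :
    Set (Fin s → ℕ) :=
  {k | ∑ j, (G j)ᵀ.mulVec (trunc b l (k j)) = 0}

/-- The QMC algorithm given by the digital net with generating matrices `G`. -/
def qmcNet (b : ℕ) {s l d : ℕ} (G : Fin s → Matrix (Fin l) (Fin d) (ZMod b))
    (f : (Fin s → ℝ) → ℝ) : ℝ :=
  ((b : ℝ) ^ d)⁻¹ * ∑ m ∈ Finset.range (b ^ d), f (netPoint b G m)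

/-- `n_j = #{i ∈ ℕ : i + a ≤ 1}` (with `i` ranging over positive integers). -/
def negCount (a : ℝ) : ℕ := Set.ncard {i : ℕ | 0 < i ∧ (i : ℝ) + a ≤ 1}

/-! ### Digits -/

/-- The basic root of unity. -/
def zt (b : ℕ) : ℂ := Complex.exp (2 * Real.pi * Complex.I / (b : ℂ))

lemma zt_prim {b : ℕ} (hb : 2 ≤ b) : IsPrimitiveRoot (zt b) b :=
  Complex.isPrimitiveRoot_exp b (by omega)

lemma natDigit_lt {b : ℕ} (hb : 2 ≤ b) (k i : ℕ) : natDigit b k i < b :=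
  Nat.mod_lt _ (by omega)

lemma realDigit_lt {b : ℕ} (hb : 2 ≤ b) (x : ℝ) (i : ℕ) : realDigit b x i < b := by
  unfold realDigit
  have h1 : ⌊x * (b : ℝ) ^ (i + 1)⌋ % (b : ℤ) < b := Int.emod_lt_of_pos _ (by omega)
  omega

lemma natDigit_eq_zero {b k i : ℕ} (h : k < b ^ i) : natDigit b k i = 0 := by
  simp [natDigit, Nat.div_eq_of_lt h]

lemma lt_bpow_self {b : ℕ} (hb : 2 ≤ b) (k : ℕ) : k < b ^ k :=
  Nat.lt_pow_self (by omega)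

/-- Sums over digits do not depend on the cutoff. -/
lemma sum_digits_eq {M : Type*} [AddCommMonoid M] {b : ℕ} (hb : 2 ≤ b) {k R : ℕ} (hR : k < b ^ R)
    (g : ℕ → ℕ → M) (hg : ∀ i, g i 0 = 0) :
    ∑ i ∈ Finset.range k, g i (natDigit b k i) = ∑ i ∈ Finset.range R, g i (natDigit b k i) := by
  have key : ∀ m n : ℕ, m ≤ n → k < b ^ m →
      ∑ i ∈ Finset.range m, g i (natDigit b k i) = ∑ i ∈ Finset.range n, g i (natDigit b k i) := by
    intro m n hmn hm
    apply Finset.sum_subset (Finset.range_mono hmn)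
    intro i _ hi
    rw [natDigit_eq_zero, hg]
    refine hm.trans_le (Nat.pow_le_pow_right (by omega) ?_)
    simpa using hi
  rcases le_total k R with h | h
  · exact key k R h (lt_bpow_self hb k)
  · exact (key R k h hR).symm

lemma natDigit_add_mul {b N d r m i : ℕ} (hb : 2 ≤ b) (hN : N = b ^ m) (hr : r < N) (hd : d < b) :
    natDigit b (d * N + r) i = if i < m then natDigit b r i else if i = m then d else 0 := by
  subst hN
  unfold natDigit
  split_ifs with h1 h2
  · have e : b ^ m = b ^ i * (b * b ^ (m - i - 1)) := by
      rw [← pow_succ', ← pow_add]; congr 1; omega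
    have : d * b ^ m + r = r + b ^ i * (b * (b ^ (m - i - 1) * d)) := by rw [e]; ring
    rw [this, Nat.add_mul_div_left _ _ (by positivity), Nat.add_mul_mod_self_left]
  · subst h2
    rw [add_comm, Nat.add_mul_div_right _ _ (by positivity), Nat.div_eq_of_lt hr, zero_add,
      Nat.mod_eq_of_lt hd]
  · rw [Nat.div_eq_of_lt]; · simp
    calc d * b ^ m + r < (d + 1) * b ^ m := by rw [add_mul]; omega
      _ ≤ b * b ^ m := Nat.mul_le_mul_right _ hd
      _ = b ^ (m + 1) := by ring
      _ ≤ b ^ i := Nat.pow_le_pow_right (by omega) (by omega)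

lemma sum_range_blocks {M : Type*} [AddCommMonoid M] (N c : ℕ) (F : ℕ → M) :
    ∑ k ∈ Finset.range (c * N), F k
      = ∑ d ∈ Finset.range c, ∑ r ∈ Finset.range N, F (d * N + r) := by
  induction c with
  | zero => simp
  | succ c ih => rw [add_mul, one_mul, Finset.sum_range_add, ih, Finset.sum_range_succ]

/-- Sum over all numbers with `m` digits of a product over digits. -/
lemma sum_prod_digits {K : Type*} [CommRing K] {b : ℕ} (hb : 2 ≤ b) (m : ℕ) (G : ℕ → ℕ → K) :
    ∑ k ∈ Finset.range (b ^ m), ∏ i ∈ Finset.range m, G i (natDigit b k i)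
      = ∏ i ∈ Finset.range m, ∑ d ∈ Finset.range b, G i d := by
  induction m with
  | zero => simp
  | succ m ih =>
    rw [pow_succ', sum_range_blocks, Finset.prod_range_succ, ← ih, mul_comm, Finset.sum_mul]
    refine Finset.sum_congr rfl fun d hd => ?_
    rw [Finset.mul_sum]
    refine Finset.sum_congr rfl fun r hr => ?_
    rw [Finset.mem_range] at hd hr
    rw [Finset.prod_range_succ, mul_comm]
    congr 1
    · rw [natDigit_add_mul hb rfl hr hd]; simp
    · refine Finset.prod_congr rfl fun i hi => ?_
      rw [natDigit_add_mul hb rfl hr hd, if_pos (Finset.mem_range.1 hi)]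

lemma wal1_eq {b : ℕ} (hb : 2 ≤ b) {k R : ℕ} (hR : k < b ^ R) (x : ℝ) :
    wal1 b k x = ∏ i ∈ Finset.range R, zt b ^ (natDigit b k i * realDigit b x i) := by
  unfold wal1
  rw [sum_digits_eq hb hR (fun i d => d * realDigit b x i) (by simp)]
  rw [Finset.prod_pow_eq_pow_sum, zt, ← Complex.exp_nat_mul, mul_comm]

lemma dickWt_eq {b : ℕ} (hb : 2 ≤ b) {k R : ℕ} (hR : k < b ^ R) (a : ℝ) :
    dickWt b a k = ∑ i ∈ Finset.range R, if natDigit b k i ≠ 0 then ((i : ℝ) + 1 + a) else 0 := by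
  unfold dickWt
  exact sum_digits_eq hb hR (fun i d => if d ≠ 0 then ((i : ℝ) + 1 + a) else 0) (by simp)

lemma realDigit_eq {b : ℕ} (hb : 2 ≤ b) {R i : ℕ} (hi : i < R) {x : ℝ} (hx : 0 ≤ x) :
    realDigit b x i = natDigit b ⌊x * (b : ℝ) ^ R⌋₊ (R - 1 - i) := by
  unfold realDigit natDigit
  have hb0 : (b : ℝ) ≠ 0 := by positivity
  have e : x * (b : ℝ) ^ (i + 1) = x * (b : ℝ) ^ R / ((b ^ (R - 1 - i) : ℕ) : ℝ) := by
    push_cast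
    rw [eq_div_iff (by positivity), mul_assoc, ← pow_add]
    congr 2; omega
  rw [← Nat.floor_div_natCast, ← e]
  have h0 : 0 ≤ x * (b : ℝ) ^ (i + 1) := by positivity
  rw [← Int.natCast_floor_eq_floor h0]
  norm_cast

lemma geom_zt {b : ℕ} (hb : 2 ≤ b) {u v : ℕ} (hu : u < b) (hv : v < b) :
    ∑ d ∈ Finset.range b, zt b ^ (d * u) * (starRingEnd ℂ) (zt b ^ (d * v))
      = if u = v then (b : ℂ) else 0 := by
  have hp := zt_prim hb
  have hnorm : ∀ n : ℕ, ‖zt b ^ n‖ = 1 := by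
    intro n; rw [norm_pow, hp.norm'_eq_one (by omega), one_pow]
  have hne : zt b ≠ 0 := hp.ne_zero (by omega)
  have hconj : ∀ n : ℕ, (starRingEnd ℂ) (zt b ^ n) = (zt b ^ n)⁻¹ := by
    intro n; rw [Complex.inv_eq_conj (hnorm n)]
  have e : ∀ d, zt b ^ (d * u) * (starRingEnd ℂ) (zt b ^ (d * v)) = (zt b ^ u / zt b ^ v) ^ d := by
    intro d; rw [hconj, div_pow, ← pow_mul, ← pow_mul, mul_comm u, mul_comm v, div_eq_mul_inv]
  simp_rw [e]
  split_ifs with h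
  · subst h
    rw [div_self (pow_ne_zero _ hne)]; simp
  · have hz : zt b ^ u / zt b ^ v ≠ 1 := by
      intro hc
      rw [div_eq_one_iff_eq (pow_ne_zero _ hne)] at hc
      exact h (hp.pow_inj hu hv hc)
    rw [geom_sum_eq hz, div_pow, ← pow_mul, ← pow_mul, mul_comm u, mul_comm v, pow_mul, pow_mul,
      hp.pow_eq_one]
    simp

/-- Integral of a function of `⌊N x⌋`. -/
lemma integral_floor {N : ℕ} (hN : 0 < N) (F : ℕ → ℂ) :
    ∫ x in Set.Ico (0 : ℝ) 1, F ⌊x * N⌋₊ = (N : ℂ)⁻¹ * ∑ m ∈ Finset.range N, F m := by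
  have hN' : (N : ℝ) ≠ 0 := by positivity
  rw [integral_Ico_eq_integral_Ioc, ← intervalIntegral.integral_of_le zero_le_one]
  rw [intervalIntegral.integral_comp_mul_right (fun y => F ⌊y⌋₊) hN']
  simp only [zero_mul, one_mul]
  have hcongr : ∀ m : ℕ, Set.EqOn (fun _ : ℝ => F m) (fun y => F ⌊y⌋₊)
      (Set.Ioo (m : ℝ) ((m + 1 : ℕ) : ℝ)) := by
    intro m y hy
    have : ⌊y⌋₊ = m := by
      rw [Nat.floor_eq_iff ((Nat.cast_nonneg m).trans hy.1.le)]
      refine ⟨hy.1.le, ?_⟩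
      have := hy.2
      push_cast at this; exact this
    simp [this]
  have h1 : ∀ m : ℕ, IntervalIntegrable (fun y : ℝ => F ⌊y⌋₊) volume (m : ℝ) ((m + 1 : ℕ) : ℝ) := by
    intro m
    rw [intervalIntegrable_iff_integrableOn_Ioo_of_le (by simp)]
    refine IntegrableOn.congr_fun (f := fun _ => F m) ?_ (hcongr m) measurableSet_Ioo
    simp
  have h2 := intervalIntegral.sum_integral_adjacent_intervals (a := fun m : ℕ => (m : ℝ)) (n := N)
    (μ := volume) (f := fun y : ℝ => F ⌊y⌋₊) (fun m _ => h1 m)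
  simp only [Nat.cast_zero] at h2
  rw [← h2]
  have h3 : ∀ m : ℕ, ∫ y in (m : ℝ)..((m + 1 : ℕ) : ℝ), F ⌊y⌋₊ = F m := by
    intro m
    rw [intervalIntegral.integral_of_le (by simp), integral_Ioc_eq_integral_Ioo,
      ← setIntegral_congr_fun measurableSet_Ioo (hcongr m)]
    simp
  rw [Finset.sum_congr rfl fun m _ => h3 m]
  rw [Complex.real_smul]
  push_cast; rfl

/-- Independence of digits. -/
lemma integral_digits {b : ℕ} (hb : 2 ≤ b) (R : ℕ) (G : ℕ → ℕ → ℂ) :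
    ∫ x in Set.Ico (0 : ℝ) 1, ∏ i ∈ Finset.range R, G i (realDigit b x i)
      = ∏ i ∈ Finset.range R, ((b : ℂ)⁻¹ * ∑ d ∈ Finset.range b, G i d) := by
  have e : ∀ x ∈ Set.Ico (0 : ℝ) 1, ∏ i ∈ Finset.range R, G i (realDigit b x i)
      = (fun M : ℕ => ∏ i ∈ Finset.range R, G (R - 1 - i) (natDigit b M i))
          ⌊x * ((b ^ R : ℕ) : ℝ)⌋₊ := by
    intro x hx
    dsimp only
    rw [← Finset.prod_range_reflect]
    refine Finset.prod_congr rfl fun i hi => ?_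
    rw [Finset.mem_range] at hi
    rw [realDigit_eq hb (R := R) (by omega) hx.1]
    push_cast
    congr 2; omega
  rw [setIntegral_congr_fun measurableSet_Ico e, integral_floor (N := b ^ R) (Nat.pow_pos (by omega))
      (fun M : ℕ => ∏ i ∈ Finset.range R, G (R - 1 - i) (natDigit b M i))]
  rw [sum_prod_digits hb R (fun i d => G (R - 1 - i) d), Finset.prod_mul_distrib,
    ← Finset.prod_range_reflect (fun i => ∑ d ∈ Finset.range b, G i d)]
  simp

lemma setIntegral_cube {s : ℕ} (F : Fin s → ℝ → ℂ) :
    ∫ x in unitCube s, ∏ j, F j (x j) = ∏ j, ∫ x in Set.Ico (0 : ℝ) 1, F j x := by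
  unfold unitCube
  rw [volume_pi, Measure.restrict_pi_pi, integral_fintype_prod_eq_prod]

lemma exists_top_digit {b : ℕ} (hb : 2 ≤ b) {k l : ℕ} (h : b ^ l ≤ k) :
    ∃ r, l ≤ r ∧ r < l + k ∧ natDigit b k r ≠ 0 := by
  have hk : k ≠ 0 := by
    have : 0 < b ^ l := Nat.pow_pos (by omega)
    omega
  have h1 := Nat.pow_log_le_self b hk
  have h2 := Nat.lt_pow_succ_log_self (b := b) (by omega) k
  refine ⟨Nat.log b k, Nat.le_log_of_pow_le (by omega) h, ?_, ?_⟩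
  · have := Nat.log_lt_self b hk; omega
  · unfold natDigit
    have h3 : k / b ^ Nat.log b k < b := by
      rw [Nat.div_lt_iff_lt_mul (Nat.pow_pos (by omega))]
      rwa [pow_succ'] at h2
    rw [Nat.mod_eq_of_lt h3]
    have := Nat.div_pos h1 (Nat.pow_pos (by omega))
    omega

/-- Indicator (complex valued) of a one-dimensional elementary interval. -/
def ind1 (b l : ℕ) (η : ℕ → ℕ) (x : ℝ) : ℂ :=
  ∏ i ∈ Finset.range l, if realDigit b x i = η i then (1 : ℂ) else 0

/-- Walsh coefficients of `ind1`. -/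
def cf1 (b l : ℕ) (η : ℕ → ℕ) (k : ℕ) : ℂ :=
  if k < b ^ l then
    ∏ i ∈ Finset.range l, (b : ℂ)⁻¹ * (starRingEnd ℂ) (zt b ^ (natDigit b k i * η i)) else 0

lemma int_ind1 {b : ℕ} (hb : 2 ≤ b) (l : ℕ) (η : ℕ → ℕ) (hη : ∀ i, η i < b) (k : ℕ) :
    ∫ x in Set.Ico (0 : ℝ) 1, ind1 b l η x * (starRingEnd ℂ) (wal1 b k x) = cf1 b l η k := by
  unfold cf1 ind1
  split_ifs with h
  · have e : ∀ x : ℝ, (∏ i ∈ Finset.range l, if realDigit b x i = η i then (1 : ℂ) else 0) *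
        (starRingEnd ℂ) (wal1 b k x) = ∏ i ∈ Finset.range l,
          (fun i d => (if d = η i then (1 : ℂ) else 0) *
            (starRingEnd ℂ) (zt b ^ (natDigit b k i * d))) i (realDigit b x i) := by
      intro x
      rw [wal1_eq hb h, map_prod, Finset.prod_mul_distrib]
    simp_rw [e]
    rw [integral_digits hb l (fun i d => (if d = η i then (1 : ℂ) else 0) *
            (starRingEnd ℂ) (zt b ^ (natDigit b k i * d)))]
    refine Finset.prod_congr rfl fun i _ => ?_
    congr 1
    simp [hη i]
  · push Not at h
    have hR : k < b ^ (l + k) := (lt_bpow_self hb k).trans_le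
      (Nat.pow_le_pow_right (by omega) (by omega))
    have e : ∀ x : ℝ, (∏ i ∈ Finset.range l, if realDigit b x i = η i then (1 : ℂ) else 0) *
        (starRingEnd ℂ) (wal1 b k x) = ∏ i ∈ Finset.range (l + k),
          (fun i d => (if i < l then (if d = η i then (1 : ℂ) else 0) else 1) *
            (starRingEnd ℂ) (zt b ^ (natDigit b k i * d))) i (realDigit b x i) := by
      intro x
      rw [wal1_eq hb hR, map_prod, Finset.prod_mul_distrib]
      congr 1
      rw [Finset.prod_range_add]
      simp only [add_lt_iff_neg_left, not_lt_zero, if_false, Finset.prod_const_one, mul_one]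
      refine Finset.prod_congr rfl fun i hi => ?_
      rw [if_pos (Finset.mem_range.1 hi)]
    simp_rw [e]
    rw [integral_digits hb (l + k)
      (fun i d => (if i < l then (if d = η i then (1 : ℂ) else 0) else 1) *
            (starRingEnd ℂ) (zt b ^ (natDigit b k i * d)))]
    obtain ⟨r, hr1, hr2, hr3⟩ := exists_top_digit hb h
    refine Finset.prod_eq_zero (Finset.mem_range.2 hr2) ?_
    have := geom_zt hb (u := 0) (v := natDigit b k r) (by omega) (natDigit_lt hb k r)
    rw [if_neg (Ne.symm hr3)] at this
    simp only [not_lt.2 hr1, if_false]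
    rw [mul_eq_zero]; right
    rw [← this]
    refine Finset.sum_congr rfl fun d _ => ?_
    rw [mul_zero, pow_zero, mul_comm d]

lemma sum_cf1 {b : ℕ} (hb : 2 ≤ b) (l : ℕ) (η : ℕ → ℕ) (hη : ∀ i, η i < b) (x : ℝ) :
    ∑ k ∈ Finset.range (b ^ l), cf1 b l η k * wal1 b k x = ind1 b l η x := by
  have e : ∀ k ∈ Finset.range (b ^ l), cf1 b l η k * wal1 b k x =
      ∏ i ∈ Finset.range l, (fun i d => (b : ℂ)⁻¹ * (zt b ^ (d * realDigit b x i) *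
        (starRingEnd ℂ) (zt b ^ (d * η i)))) i (natDigit b k i) := by
    intro k hk
    rw [Finset.mem_range] at hk
    rw [cf1, if_pos hk, wal1_eq hb hk, ← Finset.prod_mul_distrib]
    refine Finset.prod_congr rfl fun i _ => ?_
    ring
  rw [Finset.sum_congr rfl e, sum_prod_digits hb l (fun i d => (b : ℂ)⁻¹ *
    (zt b ^ (d * realDigit b x i) * (starRingEnd ℂ) (zt b ^ (d * η i)))), ind1]
  refine Finset.prod_congr rfl fun i _ => ?_
  rw [← Finset.mul_sum, geom_zt hb (realDigit_lt hb x i) (hη i)]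
  have : (b : ℂ) ≠ 0 := by norm_cast; omega
  split_ifs <;> simp [this]

lemma norm_zt_pow {b : ℕ} (hb : 2 ≤ b) (n : ℕ) : ‖zt b ^ n‖ = 1 := by
  rw [norm_pow, (zt_prim hb).norm'_eq_one (by omega), one_pow]

lemma norm_cf1 {b : ℕ} (hb : 2 ≤ b) {l : ℕ} (η : ℕ → ℕ) {k : ℕ} (hk : k < b ^ l) :
    ‖cf1 b l η k‖ = ((b : ℝ) ^ l)⁻¹ := by
  rw [cf1, if_pos hk, norm_prod]
  simp [(zt_prim hb).norm'_eq_one (show b ≠ 0 by omega)]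

lemma wal1_zero (b : ℕ) (x : ℝ) : wal1 b 0 x = 1 := by simp [wal1]

lemma wal_zero (b : ℕ) {s : ℕ} (x : Fin s → ℝ) : wal b (0 : Fin s → ℕ) x = 1 := by
  simp [wal, wal1_zero]

lemma norm_wal1 {b : ℕ} (hb : 2 ≤ b) (k : ℕ) (x : ℝ) : ‖wal1 b k x‖ = 1 := by
  rw [wal1_eq hb (lt_bpow_self hb k), norm_prod]
  exact Finset.prod_eq_one fun i _ => norm_zt_pow hb _

lemma norm_wal {b : ℕ} (hb : 2 ≤ b) {s : ℕ} (k : Fin s → ℕ) (x : Fin s → ℝ) :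
    ‖wal b k x‖ = 1 := by
  rw [wal, norm_prod]
  exact Finset.prod_eq_one fun i _ => norm_wal1 hb _ _

lemma wal1_pow {b : ℕ} (hb : 2 ≤ b) (k : ℕ) (x : ℝ) : wal1 b k x ^ b = 1 := by
  rw [wal1_eq hb (lt_bpow_self hb k), ← Finset.prod_pow]
  refine Finset.prod_eq_one fun i _ => ?_
  rw [← pow_mul, mul_comm, pow_mul, (zt_prim hb).pow_eq_one, one_pow]

lemma wal_pow {b : ℕ} (hb : 2 ≤ b) {s : ℕ} (k : Fin s → ℕ) (x : Fin s → ℝ) :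
    wal b k x ^ b = 1 := by
  rw [wal, ← Finset.prod_pow]
  exact Finset.prod_eq_one fun i _ => wal1_pow hb _ _

lemma measurable_realDigit (b i : ℕ) : Measurable fun x : ℝ => realDigit b x i := by
  unfold realDigit
  have h1 : Measurable fun x : ℝ => ⌊x * (b : ℝ) ^ (i + 1)⌋ :=
    Int.measurable_floor.comp (measurable_id.mul_const _)
  exact (measurable_from_top (f := fun z : ℤ => (z % (b : ℤ)).toNat)).comp h1

lemma measurable_wal1 {b : ℕ} (hb : 2 ≤ b) (k : ℕ) : Measurable (wal1 b k) := by
  have : wal1 b k = fun x => ∏ i ∈ Finset.range k, zt b ^ (natDigit b k i * realDigit b x i) := by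
    funext x; exact wal1_eq hb (lt_bpow_self hb k) x
  rw [this]
  refine Finset.measurable_prod _ fun i _ => ?_
  exact (measurable_from_top (f := fun n : ℕ => zt b ^ (natDigit b k i * n))).comp
    (measurable_realDigit b i)

lemma measurable_wal {b : ℕ} (hb : 2 ≤ b) {s : ℕ} (k : Fin s → ℕ) :
    Measurable (wal b k) := by
  unfold wal
  exact Finset.measurable_prod _ fun j _ => (measurable_wal1 hb _).comp (measurable_pi_apply j)

lemma integral_wal {b : ℕ} (hb : 2 ≤ b) {s : ℕ} (k : Fin s → ℕ) :
    ∫ x in unitCube s, wal b k x = if k = 0 then 1 else 0 := by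
  unfold wal
  rw [setIntegral_cube (fun j => wal1 b (k j))]
  have h : ∀ j, ∫ x in Set.Ico (0 : ℝ) 1, wal1 b (k j) x = if k j = 0 then 1 else 0 := by
    intro j
    have := int_ind1 hb 0 (fun _ => 0) (by intro; omega) (k j)
    simp only [ind1, cf1, Finset.range_zero, Finset.prod_empty, one_mul, pow_zero,
      Nat.lt_one_iff] at this
    rw [integral_conj] at this
    have h2 := congrArg (starRingEnd ℂ) this
    rw [Complex.conj_conj] at h2
    rw [h2]; split_ifs <;> simp
  simp_rw [h]
  split_ifs with h0
  · subst h0; simp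
  · obtain ⟨j, hj⟩ := Function.ne_iff.1 h0
    exact Finset.prod_eq_zero (Finset.mem_univ j) (by simpa using hj)

lemma walshCoeff_zero {b s : ℕ} (f : (Fin s → ℝ) → ℝ) :
    walshCoeff b f 0 = (intBox s f : ℂ) := by
  unfold walshCoeff intBox
  simp only [wal_zero, map_one, mul_one]
  exact integral_ofReal

lemma dickWtV_zero (b : ℕ) {s : ℕ} (a : Fin s → ℝ) : dickWtV b a 0 = 0 := by
  simp [dickWtV, dickWt]

/-! ### Lower bound -/

lemma walshCoeff_box {b : ℕ} (hb : 2 ≤ b) {s l : ℕ} (η : Fin s → ℕ → ℕ) (hη : ∀ j i, η j i < b)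
    (c : ℝ) (f : (Fin s → ℝ) → ℝ) (hf : ∀ x, (f x : ℂ) = c * ∏ j, ind1 b l (η j) (x j))
    (k : Fin s → ℕ) : walshCoeff b f k = c * ∏ j, cf1 b l (η j) (k j) := by
  unfold walshCoeff wal
  have e : ∀ x : Fin s → ℝ, (f x : ℂ) * (starRingEnd ℂ) (∏ j, wal1 b (k j) (x j)) =
      c * ∏ j, (fun j y => ind1 b l (η j) y * (starRingEnd ℂ) (wal1 b (k j) y)) j (x j) := by
    intro x
    rw [hf, map_prod, Finset.prod_mul_distrib, mul_assoc]
  simp_rw [e]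
  rw [integral_const_mul, setIntegral_cube
    (fun j y => ind1 b l (η j) y * (starRingEnd ℂ) (wal1 b (k j) y))]
  simp_rw [fun j => int_ind1 hb l (η j) (hη j) (k j)]

lemma box_props {b : ℕ} (hb : 2 ≤ b) {s l : ℕ} (η : Fin s → ℕ → ℕ) (hη : ∀ j i, η j i < b)
    (a : Fin s → ℝ) (Mb : ℝ)
    (hM : ∀ k : Fin s → ℕ, (∀ j, k j < b ^ l) → dickWtV b a k ≤ Mb)
    (c : ℝ) (hc : |c| = (b : ℝ) ^ (l * s) * (b : ℝ) ^ (-Mb))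
    (f : (Fin s → ℝ) → ℝ) (hf : ∀ x, (f x : ℂ) = c * ∏ j, ind1 b l (η j) (x j)) :
    MemW b a f ∧ normW b a f ≤ 1 ∧ intBox s f = c / (b : ℝ) ^ (l * s) := by
  have hb0 : (0 : ℝ) < b := by positivity
  have hW := walshCoeff_box hb η hη c f hf
  have hle : ∀ k : Fin s → ℕ, ‖walshCoeff b f k‖ * (b : ℝ) ^ dickWtV b a k ≤ 1 := by
    intro k
    by_cases hk : ∀ j, k j < b ^ l
    · rw [hW, norm_mul, Complex.norm_real, Real.norm_eq_abs, hc, norm_prod,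
        Finset.prod_congr rfl (fun j _ => norm_cf1 hb (η j) (hk j))]
      simp only [Finset.prod_const, Finset.card_univ, Fintype.card_fin]
      rw [inv_pow, ← pow_mul]
      have h1 : (b : ℝ) ^ (l * s) ≠ 0 := by positivity
      rw [mul_right_comm (_ ^ (l * s)), mul_inv_cancel₀ h1, one_mul, ← Real.rpow_add hb0]
      apply Real.rpow_le_one_of_one_le_of_nonpos
      · norm_cast; omega
      · linarith [hM k hk]
    · push Not at hk
      obtain ⟨j, hj⟩ := hk
      rw [hW, Finset.prod_eq_zero (Finset.mem_univ j) (by rw [cf1, if_neg (not_lt.2 hj)])]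
      simp
  refine ⟨⟨?_, ⟨1, ?_⟩⟩, ?_, ?_⟩
  · intro x _
    have h1 : (f x : ℂ) = ∑ k ∈ Fintype.piFinset (fun _ : Fin s => Finset.range (b ^ l)),
        walshCoeff b f k * wal b k x := by
      rw [hf]
      simp_rw [hW, wal, mul_assoc, ← Finset.prod_mul_distrib]
      rw [← Finset.mul_sum, ← Finset.prod_univ_sum (fun _ => Finset.range (b ^ l))
        (fun j k => cf1 b l (η j) k * wal1 b k (x j))]
      simp_rw [fun j => sum_cf1 hb l (η j) (hη j) (x j)]
    rw [h1]
    apply hasSum_sum_of_ne_finset_zero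
    intro k hk
    simp only [Fintype.mem_piFinset, Finset.mem_range, not_forall, not_lt] at hk
    obtain ⟨j, hj⟩ := hk
    rw [hW, Finset.prod_eq_zero (Finset.mem_univ j) (by rw [cf1, if_neg (not_lt.2 hj)])]
    simp
  · rintro _ ⟨k, rfl⟩; exact hle k
  · exact ciSup_le hle
  · have h0 := hW 0
    rw [walshCoeff_zero] at h0
    have h1 : ∀ j, cf1 b l (η j) 0 = ((b : ℂ) ^ l)⁻¹ := by
      intro j
      rw [cf1, if_pos (Nat.pow_pos (by omega))]
      simp [natDigit]
    simp only [Pi.zero_apply, h1, Finset.prod_const, Finset.card_univ, Fintype.card_fin] at h0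
    rw [inv_pow, ← pow_mul, ← div_eq_mul_inv] at h0
    exact_mod_cast h0

lemma minErr_ge {b : ℕ} (hb : 2 ≤ b) {n s l : ℕ} (a : Fin s → ℝ) (Mb : ℝ)
    (hM : ∀ k : Fin s → ℕ, (∀ j, k j < b ^ l) → dickWtV b a k ≤ Mb)
    (hn : n < b ^ (l * s)) :
    ENNReal.ofReal ((b : ℝ) ^ (-Mb)) ≤ minErr n s {f | MemW b a f} (normW b a) := by
  unfold minErr
  refine le_iInf fun t => le_iInf fun _ => le_iInf fun φ => ?_
  -- an empty box
  obtain ⟨η0, hη0⟩ : ∃ η0 : Fin s → Fin l → Fin b, ∀ q : Fin n,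
      (fun j (i : Fin l) => (⟨realDigit b (t q j) i, realDigit_lt hb _ _⟩ : Fin b)) ≠ η0 := by
    by_contra! hcon
    have hsurj : Function.Surjective (fun q : Fin n => fun (j : Fin s) (i : Fin l) =>
      (⟨realDigit b (t q j) i, realDigit_lt hb _ _⟩ : Fin b)) := hcon
    have := Fintype.card_le_of_surjective _ hsurj
    simp [← pow_mul] at this
    omega
  set η : Fin s → ℕ → ℕ := fun j i => if h : i < l then (η0 j ⟨i, h⟩ : ℕ) else 0 with hηdef
  have hη : ∀ j i, η j i < b := by
    intro j i; simp only [hηdef]; split_ifs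
    · exact (η0 _ _).2
    · omega
  have hvan : ∀ q, ∏ j, ind1 b l (η j) (t q j) = 0 := by
    intro q
    by_contra hne
    apply hη0 q
    funext j i
    rw [← ne_eq, Finset.prod_ne_zero_iff] at hne
    have h1 := hne j (Finset.mem_univ j)
    rw [ind1, Finset.prod_ne_zero_iff] at h1
    have h2 := h1 i (Finset.mem_range.2 i.2)
    apply Fin.ext
    simp only [ne_eq, ite_eq_right_iff, one_ne_zero, imp_false, not_not] at h2
    show realDigit b (t q j) i = _
    rw [h2, hηdef]; simp
  set c : ℝ := (b : ℝ) ^ (l * s) * (b : ℝ) ^ (-Mb) with hcdef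
  have hb0 : (0 : ℝ) < b := by positivity
  have hcpos : 0 < c := by positivity
  have hre : ∀ x : Fin s → ℝ, ((∏ j, ∏ i ∈ Finset.range l,
      if realDigit b (x j) i = η j i then (1 : ℝ) else 0 : ℝ) : ℂ) = ∏ j, ind1 b l (η j) (x j) := by
    intro x
    unfold ind1
    push_cast
    refine Finset.prod_congr rfl fun j _ => Finset.prod_congr rfl fun i _ => ?_
    split_ifs <;> simp
  set g : (Fin s → ℝ) → ℝ := fun x => ∏ j, ∏ i ∈ Finset.range l,
      if realDigit b (x j) i = η j i then (1 : ℝ) else 0 with hg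
  obtain ⟨p1, p2, p3⟩ := box_props hb η hη a Mb hM c (abs_of_pos hcpos) (fun x => c * g x)
    (by intro x; rw [Complex.ofReal_mul, hre])
  obtain ⟨m1, m2, m3⟩ := box_props hb η hη a Mb hM (-c) (by rw [abs_neg, abs_of_pos hcpos])
    (fun x => -c * g x) (by intro x; rw [Complex.ofReal_mul, hre])
  have hg0 : ∀ q, g (t q) = 0 := by
    intro q
    have := hre (t q)
    rw [hvan] at this
    exact Complex.ofReal_eq_zero.1 this
  have hI : c / (b : ℝ) ^ (l * s) = (b : ℝ) ^ (-Mb) := by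
    rw [hcdef]; field_simp
  rw [neg_div] at m3
  rw [hI] at p3 m3
  have hE : ∀ f : (Fin s → ℝ) → ℝ, MemW b a f → normW b a f ≤ 1 →
      ENNReal.ofReal |intBox s f - φ fun i => f (t i)| ≤
      worstErr s {f | MemW b a f} (normW b a) fun f => φ fun i => f (t i) := by
    intro f h1 h2
    unfold worstErr
    exact le_iSup_of_le f (le_iSup_of_le h1 (le_iSup_of_le h2 le_rfl))
  have e1 := hE _ p1 p2
  have e2 := hE _ m1 m2
  rw [p3] at e1
  rw [m3] at e2
  simp only [hg0, mul_zero] at e1 e2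
  set v := φ fun _ => 0
  rcases le_total v 0 with hv | hv
  · refine le_trans (ENNReal.ofReal_le_ofReal ?_) e1
    exact le_trans (by linarith) (le_abs_self _)
  · refine le_trans (ENNReal.ofReal_le_ofReal ?_) e2
    exact le_trans (by linarith) (neg_le_abs _)

lemma dickWtV_box_le {b : ℕ} (hb : 2 ≤ b) {s l : ℕ} (a : Fin s → ℝ) (α : ℝ) (hα : 0 ≤ α)
    (ha : ∀ j, a j ≤ α) (k : Fin s → ℕ) (hk : ∀ j, k j < b ^ l) :
    dickWtV b a k ≤ s * (l * (l + α)) := by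
  unfold dickWtV
  calc ∑ j, dickWt b (a j) (k j) ≤ ∑ j : Fin s, (l * (l + α) : ℝ) := by
        refine Finset.sum_le_sum fun j _ => ?_
        rw [dickWt_eq hb (hk j)]
        calc _ ≤ ∑ i ∈ Finset.range l, (l + α : ℝ) := by
              refine Finset.sum_le_sum fun i hi => ?_
              have hi' : (i : ℝ) + 1 ≤ l := by exact_mod_cast Finset.mem_range.1 hi
              split_ifs
              · linarith [ha j]
              · positivity
          _ = _ := by simp; ring
    _ = _ := by simp

lemma lower_step {b : ℕ} (hb : 2 ≤ b) (a : ℕ → ℝ) (ha : Monotone a)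
    (p : ℝ) (hp1 : 1 < p) {A C c : ℝ} (hA : 0 < A) (hC : 0 < C) (hc : 0 < c)
    (H : ∀ s n : ℕ, 0 < s → 0 < n →
          minErr n s {f | MemW b (fun j : Fin s => a j) f} (normW b (fun j : Fin s => a j)) ≤
            ENNReal.ofReal (C * Real.exp (A * s) * Real.exp (-c * (Real.log n) ^ p)))
    (j l : ℕ) (hl : 2 ≤ l) :
    c * (Real.log b / 2) ^ p * ((l : ℝ) * (j + 1)) ^ (p - 1) ≤
      |Real.log C| + A + Real.log b * (l + max (a j) 0) := by
  set s := j + 1 with hs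
  set α := max (a j) 0 with hα
  have hα0 : 0 ≤ α := le_max_right _ _
  have hb1 : (1 : ℝ) < b := by exact_mod_cast (by omega : 1 < b)
  have hLb : 0 < Real.log b := Real.log_pos hb1
  have hb0 : (0 : ℝ) < b := by linarith
  have hls : 2 ≤ l * s := by nlinarith
  have h1 := minErr_ge hb (n := b ^ (l * s - 1)) (s := s) (l := l) (fun j : Fin s => a j)
    (s * (l * (l + α)))
    (dickWtV_box_le hb _ α hα0 (fun i => le_trans (ha (by have := i.2; omega)) (le_max_left _ _)))
    (Nat.pow_lt_pow_right (by omega) (by omega))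
  have h2 := h1.trans (H s (b ^ (l * s - 1)) (by omega) (Nat.pow_pos (by omega)))
  rw [ENNReal.ofReal_le_ofReal_iff (by positivity)] at h2
  have h3 := Real.log_le_log (by positivity) h2
  rw [Real.log_rpow hb0, Real.log_mul (by positivity) (by positivity),
    Real.log_mul (by positivity) (by positivity), Real.log_exp, Real.log_exp] at h3
  push_cast at h3
  rw [Real.log_pow] at h3
  have hN : ((l * s - 1 : ℕ) : ℝ) = (l : ℝ) * s - 1 := by
    rw [Nat.cast_sub (by omega)]; push_cast; ring
  have hlsR : (2 : ℝ) ≤ (l : ℝ) * s := by exact_mod_cast hls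
  have hsR : (s : ℝ) = j + 1 := by rw [hs]; push_cast; ring
  have h4 : (Real.log b / 2) ^ p * ((l : ℝ) * s) ^ p ≤ (((l * s - 1 : ℕ) : ℝ) * Real.log b) ^ p := by
    rw [← Real.mul_rpow (by positivity) (by positivity)]
    apply Real.rpow_le_rpow (by positivity) _ (by linarith)
    rw [hN]; nlinarith
  have h5 : ((l : ℝ) * s) ^ p = ((l : ℝ) * s) ^ (p - 1) * (l * s) := by
    rw [← Real.rpow_add_one (by positivity)]; congr 1; ring
  rw [← hsR]
  have hX : 0 < (l : ℝ) * s := by linarith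
  refine le_of_mul_le_mul_right ?_ hX
  have hl1 : (1 : ℝ) ≤ l := by exact_mod_cast (by omega : 1 ≤ l)
  have hs1 : (1 : ℝ) ≤ s := by exact_mod_cast (by omega : 1 ≤ s)
  have h6 : c * ((Real.log b / 2) ^ p * ((l : ℝ) * s) ^ p) ≤
    c * (((l * s - 1 : ℕ) : ℝ) * Real.log b) ^ p := mul_le_mul_of_nonneg_left h4 hc.le
  have h7 : |Real.log C| ≤ |Real.log C| * (l * s) :=
    le_mul_of_one_le_right (abs_nonneg _) (by linarith)
  have h8 : A * s ≤ A * (l * s) := by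
    apply mul_le_mul_of_nonneg_left _ hA.le
    nlinarith
  have h9 := le_abs_self (Real.log C)
  rw [h5] at h6
  nlinarith

lemma b_imp_a {b : ℕ} (hb : 2 ≤ b) (a : ℕ → ℝ) (ha : Monotone a)
    (p : ℝ) (hp1 : 1 < p) (hp2 : p < 2) {A C c : ℝ} (hA : 0 < A) (hC : 0 < C) (hc : 0 < c)
    (H : ∀ s n : ℕ, 0 < s → 0 < n →
          minErr n s {f | MemW b (fun j : Fin s => a j) f} (normW b (fun j : Fin s => a j)) ≤
            ENNReal.ofReal (C * Real.exp (A * s) * Real.exp (-c * (Real.log n) ^ p))) :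
    ∃ c : ℝ, 0 < c ∧ ∀ᶠ j : ℕ in Filter.atTop,
        c * ((j : ℝ) + 1) ^ ((p - 1) / (2 - p)) ≤ a j := by
  have hb1 : (1 : ℝ) < b := by exact_mod_cast (by omega : 1 < b)
  have hLb : 0 < Real.log b := Real.log_pos hb1
  set q := (p - 1) / (2 - p) with hq
  have h2p : 0 < 2 - p := by linarith
  have hq0 : 0 < q := div_pos (by linarith) h2p
  set κ := c * (Real.log b / 2) ^ p with hκ
  have hκ0 : 0 < κ := by positivity
  set B := |Real.log C| + A with hB
  have hB0 : 0 < B := by positivity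
  set K := (B + 2 * Real.log b) / κ with hK
  have hK0 : 0 < K := by positivity
  set δ := K ^ (-(1 / (2 - p))) with hδ
  have hδ0 : 0 < δ := by positivity
  refine ⟨δ / 2, by positivity, ?_⟩
  have htend : Tendsto (fun j : ℕ => δ * ((j : ℝ) + 1) ^ q) atTop atTop := by
    apply Tendsto.const_mul_atTop hδ0
    apply (tendsto_rpow_atTop hq0).comp
    exact tendsto_atTop_add_const_right _ _ tendsto_natCast_atTop_atTop
  filter_upwards [htend.eventually_ge_atTop 2] with j hj
  set X := δ * ((j : ℝ) + 1) ^ q with hX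
  set l := ⌊X⌋₊ with hl
  have hl2 : 2 ≤ l := Nat.le_floor (by exact_mod_cast hj)
  have hlX : (l : ℝ) ≤ X := Nat.floor_le (by linarith)
  have hlX' : X < l + 1 := Nat.lt_floor_add_one X
  have hl2R : (2 : ℝ) ≤ l := by exact_mod_cast hl2
  have h1 := lower_step hb a ha p hp1 hA hC hc H j l hl2
  have hj0 : (0 : ℝ) < (j : ℝ) + 1 := by positivity
  have hl0 : (0 : ℝ) < l := by linarith
  -- K * l ^ (2-p) ≤ (j+1)^(p-1)
  have h2 : K * (l : ℝ) ^ (2 - p) ≤ ((j : ℝ) + 1) ^ (p - 1) := by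
    have e1 : (l : ℝ) ^ (2 - p) ≤ X ^ (2 - p) := Real.rpow_le_rpow hl0.le hlX h2p.le
    have e2 : X ^ (2 - p) = K⁻¹ * ((j : ℝ) + 1) ^ (p - 1) := by
      rw [hX, Real.mul_rpow hδ0.le (by positivity), ← Real.rpow_mul hj0.le, hδ,
        ← Real.rpow_mul hK0.le, hq, div_mul_cancel₀ _ h2p.ne', neg_mul,
        one_div_mul_cancel h2p.ne', Real.rpow_neg_one]
    calc K * (l : ℝ) ^ (2 - p) ≤ K * (K⁻¹ * ((j : ℝ) + 1) ^ (p - 1)) := by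
          rw [← e2]; exact mul_le_mul_of_nonneg_left e1 hK0.le
      _ = _ := by rw [mul_inv_cancel_left₀ hK0.ne']
  have h3 : K * l ≤ ((l : ℝ) * (j + 1)) ^ (p - 1) := by
    rw [Real.mul_rpow hl0.le hj0.le]
    calc K * l = (l : ℝ) ^ (p - 1) * (K * (l : ℝ) ^ (2 - p)) := by
          rw [mul_left_comm, ← Real.rpow_add hl0]
          norm_num
      _ ≤ _ := mul_le_mul_of_nonneg_left h2 (by positivity)
  have h4 : κ * (K * l) ≤ B + Real.log b * (l + max (a j) 0) :=
    le_trans (mul_le_mul_of_nonneg_left h3 hκ0.le) h1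
  have h5 : κ * (K * l) = (B + 2 * Real.log b) * l := by
    rw [hK]; field_simp
  rw [h5] at h4
  have h6 : (l : ℝ) ≤ max (a j) 0 := by
    refine le_of_mul_le_mul_left ?_ hLb
    nlinarith
  have h7 : (l : ℝ) ≤ a j := by
    rcases le_max_iff.1 h6 with h | h
    · exact h
    · linarith
  calc δ / 2 * ((j : ℝ) + 1) ^ q = X / 2 := by rw [hX]; ring
    _ ≤ a j := by linarith

/-! ### Upper bound -/

lemma geom_bound {y : ℝ} (hy : 0 < y) (m : ℕ) :
    ∑ i ∈ Finset.range m, Real.exp (-y) ^ (i + 1) ≤ 1 / y := by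
  set r := Real.exp (-y) with hr
  have hr0 : 0 < r := Real.exp_pos _
  have h1 : (1 + y) * r ≤ 1 := by
    have : 1 + y ≤ Real.exp y := by linarith [Real.add_one_le_exp y]
    calc (1 + y) * r ≤ Real.exp y * r := mul_le_mul_of_nonneg_right this hr0.le
      _ = 1 := by rw [hr, ← Real.exp_add]; simp
  have h2 := geom_sum_mul_neg r m
  have h3 : 0 ≤ ∑ i ∈ Finset.range m, r ^ i := Finset.sum_nonneg fun i _ => by positivity
  have h4 : ∑ i ∈ Finset.range m, r ^ (i + 1) = r * ∑ i ∈ Finset.range m, r ^ i := by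
    rw [Finset.mul_sum]; exact Finset.sum_congr rfl fun i _ => by ring
  rw [h4, le_div_iff₀ hy]
  have h5 : 0 < r ^ m := by positivity
  nlinarith

lemma sum_wt_le {b : ℕ} (hb : 2 ≤ b) {s : ℕ} (a : Fin s → ℝ) {t : ℝ} (ht : 0 < t)
    (F : Finset (Fin s → ℕ)) :
    ∑ k ∈ F, (b : ℝ) ^ (-t * dickWtV b a k) ≤
      Real.exp (b / (t * Real.log b) * ∑ j, (b : ℝ) ^ (-t * a j)) := by
  have hb1 : (1 : ℝ) < b := by exact_mod_cast (by omega : 1 < b)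
  have hLb : 0 < Real.log b := Real.log_pos hb1
  have hb0 : (0 : ℝ) < b := by linarith
  set m := ∑ k ∈ F, ∑ j, k j with hm
  have hF : F ⊆ Fintype.piFinset (fun _ : Fin s => Finset.range (b ^ m)) := by
    intro k hk
    rw [Fintype.mem_piFinset]
    intro j
    rw [Finset.mem_range]
    refine lt_of_le_of_lt ?_ (lt_bpow_self hb m)
    calc k j ≤ ∑ j, k j := Finset.single_le_sum (f := fun j => k j) (by simp) (Finset.mem_univ j)
      _ ≤ m := Finset.single_le_sum (f := fun k : Fin s → ℕ => ∑ j, k j) (by simp) hk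
  set G : Fin s → ℕ → ℕ → ℝ := fun j i d => if d ≠ 0 then (b : ℝ) ^ (-t * (i + 1 + a j)) else 1
    with hG
  have e1 : ∀ k ∈ Fintype.piFinset (fun _ : Fin s => Finset.range (b ^ m)),
      (b : ℝ) ^ (-t * dickWtV b a k) =
        ∏ j, ∏ i ∈ Finset.range m, G j i (natDigit b (k j) i) := by
    intro k hk
    rw [Fintype.mem_piFinset] at hk
    rw [dickWtV, Finset.mul_sum, Real.rpow_sum_of_pos hb0]
    refine Finset.prod_congr rfl fun j _ => ?_
    rw [dickWt_eq hb (Finset.mem_range.1 (hk j)), Finset.mul_sum, Real.rpow_sum_of_pos hb0]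
    refine Finset.prod_congr rfl fun i _ => ?_
    simp only [hG]
    split_ifs <;> simp
  have e2 : ∀ j i, ∑ d ∈ Finset.range b, G j i d ≤
      Real.exp (b * (b : ℝ) ^ (-t * (i + 1 + a j))) := by
    intro j i
    obtain ⟨b', rfl⟩ : ∃ b', b = b' + 1 := ⟨b - 1, by omega⟩
    rw [Finset.sum_range_succ']
    simp only [hG]
    simp only [ne_eq, Nat.add_eq_zero_iff, one_ne_zero, and_false, not_false_eq_true, if_true,
      not_true_eq_false, if_false, Finset.sum_const, Finset.card_range, nsmul_eq_mul]
    refine le_trans ?_ (Real.add_one_le_exp _)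
    have : 0 ≤ ((b' + 1 : ℕ) : ℝ) ^ (-t * (i + 1 + a j)) := by positivity
    push_cast at this ⊢
    nlinarith
  calc ∑ k ∈ F, (b : ℝ) ^ (-t * dickWtV b a k)
      ≤ ∑ k ∈ Fintype.piFinset (fun _ : Fin s => Finset.range (b ^ m)),
        (b : ℝ) ^ (-t * dickWtV b a k) :=
        Finset.sum_le_sum_of_subset_of_nonneg hF fun _ _ _ => by positivity
    _ = ∏ j, ∏ i ∈ Finset.range m, ∑ d ∈ Finset.range b, G j i d := by
        rw [Finset.sum_congr rfl e1, ← Finset.prod_univ_sum (fun _ => Finset.range (b ^ m))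
          (fun j k => ∏ i ∈ Finset.range m, G j i (natDigit b k i))]
        exact Finset.prod_congr rfl fun j _ => sum_prod_digits hb m (G j)
    _ ≤ ∏ j, ∏ i ∈ Finset.range m, Real.exp (b * (b : ℝ) ^ (-t * (i + 1 + a j))) := by
        have hGn : ∀ j i, 0 ≤ ∑ d ∈ Finset.range b, G j i d := by
          intro j i
          refine Finset.sum_nonneg fun d _ => ?_
          simp only [hG]; split_ifs <;> positivity
        exact Finset.prod_le_prod (fun j _ => Finset.prod_nonneg fun i _ => hGn j i)
          fun j _ => Finset.prod_le_prod (fun i _ => hGn j i) fun i _ => e2 j i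
    _ = Real.exp (∑ j, ∑ i ∈ Finset.range m, b * (b : ℝ) ^ (-t * (i + 1 + a j))) := by
        rw [Real.exp_sum]
        exact Finset.prod_congr rfl fun j _ => (Real.exp_sum _ _).symm
    _ ≤ _ := by
        apply Real.exp_le_exp.2
        rw [Finset.mul_sum]
        refine Finset.sum_le_sum fun j _ => ?_
        have e3 : ∀ i : ℕ, (b : ℝ) * (b : ℝ) ^ (-t * (i + 1 + a j)) =
            b * (b : ℝ) ^ (-t * a j) * Real.exp (-(t * Real.log b)) ^ (i + 1) := by
          intro i
          rw [mul_assoc]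
          congr 1
          rw [mul_add, Real.rpow_add hb0, mul_comm, ← Real.exp_nat_mul,
            Real.rpow_def_of_pos hb0 (-t * (i + 1))]
          congr 2
          push_cast; ring
        simp_rw [e3]
        rw [← Finset.mul_sum]
        have h0 : 0 ≤ (b : ℝ) * (b : ℝ) ^ (-t * a j) := by positivity
        calc _ ≤ (b : ℝ) * (b : ℝ) ^ (-t * a j) * (1 / (t * Real.log b)) :=
              mul_le_mul_of_nonneg_left (geom_bound (by positivity) m) h0
          _ = _ := by ring

lemma zero_mem_cube (s : ℕ) : (0 : Fin s → ℝ) ∈ unitCube s := by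
  simp [unitCube]

lemma measurableSet_cube (s : ℕ) : MeasurableSet (unitCube s) :=
  MeasurableSet.univ_pi fun _ => measurableSet_Ico

lemma volume_cube (s : ℕ) : volume (unitCube s) = 1 := by
  unfold unitCube
  rw [volume_pi_pi]; simp

/-- Tchakaloff: positive quadrature formula exact on a finite set of Walsh functions. -/
lemma exists_quad {b : ℕ} (hb : 2 ≤ b) {s n : ℕ} (K : Finset (Fin s → ℕ))
    (hn : 2 * K.card + 1 ≤ n) :
    ∃ (t : Fin n → Fin s → ℝ) (w : Fin n → ℝ), (∀ i, t i ∈ unitCube s) ∧ (∀ i, 0 ≤ w i) ∧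
      ∑ i, w i = 1 ∧ ∀ k ∈ K, ∑ i, (w i : ℂ) * wal b k (t i) = if k = 0 then 1 else 0 := by
  classical
  set v : (Fin s → ℝ) → (K → ℂ) := fun x k => wal b k.1 x with hv
  have hfin : (v '' unitCube s).Finite := by
    have h1 : {z : ℂ | z ^ b = 1}.Finite := by
      have := (Polynomial.nthRoots b (1 : ℂ)).toFinset.finite_toSet
      refine this.subset ?_
      intro z hz
      simp only [Finset.mem_coe, Multiset.mem_toFinset]
      rw [Polynomial.mem_nthRoots (by omega)]; exact hz
    refine (Set.Finite.pi' (fun _ : K => h1)).subset ?_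
    rintro _ ⟨x, _, rfl⟩ k
    exact wal_pow hb _ _
  have : IsProbabilityMeasure (volume.restrict (unitCube s)) :=
    ⟨by rw [Measure.restrict_apply_univ, volume_cube]⟩
  have hmeas : Measurable v := measurable_pi_lambda _ fun k => measurable_wal hb k.1
  have hint : Integrable v (volume.restrict (unitCube s)) := by
    refine Integrable.of_bound hmeas.aestronglyMeasurable 1 ?_
    refine Filter.Eventually.of_forall fun x => ?_
    rw [pi_norm_le_iff_of_nonneg zero_le_one]
    intro k; exact (norm_wal hb _ _).le
  have hmem : (∫ x in unitCube s, v x) ∈ convexHull ℝ (v '' unitCube s) := by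
    refine (convex_convexHull ℝ _).integral_mem (hfin.isClosed_convexHull (𝕜 := ℝ)) ?_ hint
    filter_upwards [ae_restrict_mem (measurableSet_cube s)] with x hx
    exact subset_convexHull ℝ _ ⟨x, hx, rfl⟩
  obtain ⟨ι, _, z, w, hz, haff, hw0, hw1, hsum⟩ := eq_pos_convex_span_of_mem_convexHull hmem
  have hcard : Fintype.card ι ≤ n := by
    have h1 := haff.card_le_finrank_succ
    have h2 := Submodule.finrank_le (vectorSpan ℝ (Set.range z))
    have h3 : Module.finrank ℝ (K → ℂ) = 2 * K.card := by
      rw [Module.finrank_pi_fintype]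
      simp [Complex.finrank_real_complex, mul_comm]
    omega
  have hz' : ∀ i, ∃ x, x ∈ unitCube s ∧ v x = z i := by
    intro i
    obtain ⟨x, hx, hxz⟩ := hz ⟨i, rfl⟩
    exact ⟨x, hx, hxz⟩
  choose x hx hxz using hz'
  obtain ⟨emb⟩ : Nonempty (ι ↪ Fin n) := Function.Embedding.nonempty_of_card_le (by simpa using hcard)
  have hext : ∀ {M : Type} [AddCommMonoid M] (g : ι → M),
      ∑ i : Fin n, Function.extend emb g (fun _ => 0) i = ∑ i, g i := by
    intro M _ g
    have : ∑ i ∈ Finset.univ.map emb, Function.extend emb g (fun _ => 0) i =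
        ∑ i : Fin n, Function.extend emb g (fun _ => 0) i := by
      apply Finset.sum_subset (Finset.subset_univ _)
      intro i _ hi
      rw [Function.extend_apply']
      simpa using hi
    rw [← this, Finset.sum_map]
    exact Finset.sum_congr rfl fun i _ => emb.injective.extend_apply _ _ _
  refine ⟨Function.extend emb x (fun _ => 0), Function.extend emb w (fun _ => 0), ?_, ?_, ?_, ?_⟩
  · intro i
    by_cases h : ∃ q, emb q = i
    · obtain ⟨q, rfl⟩ := h
      rw [emb.injective.extend_apply]; exact hx q
    · rw [Function.extend_apply' _ _ _ h]; exact zero_mem_cube s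
  · intro i
    by_cases h : ∃ q, emb q = i
    · obtain ⟨q, rfl⟩ := h
      rw [emb.injective.extend_apply]; exact (hw0 q).le
    · rw [Function.extend_apply' _ _ _ h]
  · rw [hext, hw1]
  · intro k hk
    have h1 : ∀ i : Fin n, ((Function.extend emb w (fun _ => 0) i : ℝ) : ℂ) *
        wal b k (Function.extend emb x (fun _ => 0) i) =
        Function.extend emb (fun i => (w i : ℂ) * wal b k (x i)) (fun _ => 0) i := by
      intro i
      by_cases h : ∃ q, emb q = i
      · obtain ⟨q, rfl⟩ := h
        simp only [emb.injective.extend_apply]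
      · simp only [Function.extend_apply' _ _ _ h]; simp
    simp_rw [h1]
    rw [hext, ← integral_wal hb k]
    have h2 := congrFun hsum ⟨k, hk⟩
    have h3 : (∫ y in unitCube s, v y) ⟨k, hk⟩ = ∫ y in unitCube s, wal b k y := by
      rw [eval_integral]
      intro i; exact hint.eval i
    rw [h3] at h2
    rw [← h2, Finset.sum_apply]
    refine Finset.sum_congr rfl fun i _ => ?_
    rw [Pi.smul_apply, ← hxz, Complex.real_smul]

lemma coeff_le {b : ℕ} (hb : 2 ≤ b) {s : ℕ} {a : Fin s → ℝ} {f : (Fin s → ℝ) → ℝ}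
    (hf : MemW b a f) (hn : normW b a f ≤ 1) (k : Fin s → ℕ) :
    ‖walshCoeff b f k‖ ≤ (b : ℝ) ^ (-dickWtV b a k) := by
  have hb0 : (0 : ℝ) < b := by positivity
  have h1 : ‖walshCoeff b f k‖ * (b : ℝ) ^ dickWtV b a k ≤ 1 := (le_ciSup hf.2 k).trans hn
  rw [Real.rpow_neg hb0.le, ← one_div, le_div_iff₀ (by positivity)]
  exact h1

lemma minErr_le_one {b : ℕ} (hb : 2 ≤ b) (n s : ℕ) (a : Fin s → ℝ) :
    minErr n s {f | MemW b a f} (normW b a) ≤ 1 := by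
  unfold minErr
  refine iInf_le_of_le (fun _ => 0) (iInf_le_of_le (fun _ => zero_mem_cube s)
    (iInf_le_of_le (fun _ => 0) ?_))
  unfold worstErr
  refine iSup_le fun f => iSup_le fun hf => iSup_le fun hn => ?_
  rw [ENNReal.ofReal_le_one, sub_zero]
  have := coeff_le hb hf hn 0
  rw [walshCoeff_zero, dickWtV_zero, neg_zero, Real.rpow_zero, Complex.norm_real] at this
  exact this

lemma minErr_le {b : ℕ} (hb : 2 ≤ b) {n s : ℕ} (a : Fin s → ℝ) {T Z : ℝ} (hT : 0 ≤ T)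
    (hZ : ∀ F : Finset (Fin s → ℕ), ∑ k ∈ F, (b : ℝ) ^ (-(1 / 2) * dickWtV b a k) ≤ Z)
    (K : Finset (Fin s → ℕ)) (hK : ∀ k, k ∈ K ↔ dickWtV b a k ≤ T)
    (hn : 2 * K.card + 1 ≤ n) :
    minErr n s {f | MemW b a f} (normW b a) ≤ ENNReal.ofReal ((b : ℝ) ^ (-(T / 2)) * Z) := by
  have hb1 : (1 : ℝ) < b := by exact_mod_cast (by omega : 1 < b)
  have hb0 : (0 : ℝ) < b := by linarith
  obtain ⟨t, w, ht, hw0, hw1, hex⟩ := exists_quad hb K hn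
  unfold minErr
  refine iInf_le_of_le t (iInf_le_of_le ht
    (iInf_le_of_le (fun y => ∑ i, w i * y i) ?_))
  unfold worstErr
  refine iSup_le fun f => iSup_le fun hf => iSup_le fun hnf => ?_
  apply ENNReal.ofReal_le_ofReal
  set S : (Fin s → ℕ) → ℂ := fun k => ∑ i, (w i : ℂ) * wal b k (t i) with hS
  have hSn : ∀ k, ‖S k‖ ≤ 1 := by
    intro k
    calc ‖S k‖ ≤ ∑ i, ‖(w i : ℂ) * wal b k (t i)‖ := norm_sum_le _ _
      _ = ∑ i, w i := by
        refine Finset.sum_congr rfl fun i _ => ?_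
        rw [norm_mul, norm_wal hb, mul_one, Complex.norm_real, Real.norm_of_nonneg (hw0 i)]
      _ = 1 := hw1
  have h1 : HasSum (fun k => walshCoeff b f k * S k) ((∑ i, w i * f (t i) : ℝ) : ℂ) := by
    have : HasSum (fun k => ∑ i, (w i : ℂ) * (walshCoeff b f k * wal b k (t i)))
        (∑ i, (w i : ℂ) * (f (t i) : ℂ)) :=
      hasSum_sum fun i _ => (hf.1 (t i) (ht i)).mul_left _
    convert! this using 1
    · funext k
      rw [hS, Finset.mul_sum]
      exact Finset.sum_congr rfl fun i _ => by ring
    · push_cast; rfl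
  have h2 : HasSum (fun k : Fin s → ℕ => if k = 0 then walshCoeff b f 0 else 0)
      (intBox s f : ℂ) := by
    rw [← walshCoeff_zero (b := b)]
    exact hasSum_ite_eq 0 _
  have h3 := h2.sub h1
  have hsummable : Summable fun k : Fin s → ℕ => (b : ℝ) ^ (-(1 / 2) * dickWtV b a k) :=
    summable_of_sum_le (fun k => by positivity) hZ
  have h4 : HasSum (fun k : Fin s → ℕ => (b : ℝ) ^ (-(T / 2)) * (b : ℝ) ^ (-(1 / 2) * dickWtV b a k))
      ((b : ℝ) ^ (-(T / 2)) * ∑' k, (b : ℝ) ^ (-(1 / 2) * dickWtV b a k)) :=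
    hsummable.hasSum.mul_left _
  have h5 := h3.norm_le_of_bounded h4 (by
    intro k
    by_cases hk : k ∈ K
    · have : S k = if k = 0 then 1 else 0 := hex k hk
      rw [this]
      have h0 : (0 : ℝ) ≤ (b : ℝ) ^ (-(T / 2)) * (b : ℝ) ^ (-(1 / 2) * dickWtV b a k) := by
        positivity
      split_ifs with hk0
      · subst hk0; simpa using h0
      · simpa using h0
    · have hk0 : k ≠ 0 := by
        rintro rfl
        apply hk
        rw [hK, dickWtV_zero]; exact hT
      rw [if_neg hk0, zero_sub, norm_neg, norm_mul]
      calc ‖walshCoeff b f k‖ * ‖S k‖ ≤ ‖walshCoeff b f k‖ :=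
            mul_le_of_le_one_right (norm_nonneg _) (hSn k)
        _ ≤ (b : ℝ) ^ (-dickWtV b a k) := coeff_le hb hf hnf k
        _ ≤ _ := by
          rw [← Real.rpow_add hb0]
          apply Real.rpow_le_rpow_of_exponent_le hb1.le
          rw [hK, not_le] at hk
          linarith)
  rw [← Complex.ofReal_sub, Complex.norm_real, Real.norm_eq_abs] at h5
  refine h5.trans ?_
  apply mul_le_mul_of_nonneg_left _ (by positivity)
  exact hsummable.tsum_le_of_sum_le hZ

lemma polyexp {q c : ℝ} (hq : 0 < q) (hc : 0 < c) :
    ∃ D : ℝ, 0 < D ∧ ∀ y : ℝ, 0 ≤ y → Real.exp (-c * y ^ q) ≤ D / (1 + y) ^ 2 := by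
  set c2 := c * q / 2 with hc2
  have hc20 : 0 < c2 := by positivity
  set E := 4 * Real.exp ((2 / q) * (-1 - Real.log c2)) with hE
  have hE0 : 0 < E := by positivity
  refine ⟨4 + E, by positivity, fun y hy => ?_⟩
  rw [le_div_iff₀ (by positivity)]
  rcases le_total y 1 with h | h
  · have h1 : Real.exp (-c * y ^ q) ≤ 1 := by
      apply Real.exp_le_one_iff.2
      have : 0 ≤ y ^ q := by positivity
      nlinarith
    have h2 : (1 + y) ^ 2 ≤ 4 := by nlinarith
    have h3 : 0 < Real.exp (-c * y ^ q) := Real.exp_pos _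
    nlinarith [sq_nonneg (1 + y)]
  · have hy0 : 0 < y := by linarith
    have hz : 0 < y ^ q := by positivity
    have h1 : (1 + y) ^ 2 ≤ 4 * y ^ 2 := by nlinarith
    have h2 : Real.log (c2 * y ^ q) ≤ c2 * y ^ q - 1 := Real.log_le_sub_one_of_pos (by positivity)
    rw [Real.log_mul hc20.ne' hz.ne', Real.log_rpow hy0] at h2
    have h3 : 2 * Real.log y ≤ c * y ^ q + (2 / q) * (-1 - Real.log c2) := by
      have h4 := mul_le_mul_of_nonneg_left h2 (show (0 : ℝ) ≤ 2 / q by positivity)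
      have e1 : 2 / q * (Real.log c2 + q * Real.log y) = 2 / q * Real.log c2 + 2 * Real.log y := by
        field_simp
      have e2 : 2 / q * (c2 * y ^ q - 1) = c * y ^ q - 2 / q := by
        rw [hc2]; field_simp
      rw [e1, e2] at h4
      linarith
    have h5 : y ^ 2 = Real.exp (2 * Real.log y) := by
      rw [two_mul, Real.exp_add, Real.exp_log hy0, sq]
    calc Real.exp (-c * y ^ q) * (1 + y) ^ 2 ≤ Real.exp (-c * y ^ q) * (4 * y ^ 2) :=
          mul_le_mul_of_nonneg_left h1 (Real.exp_pos _).le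
      _ = 4 * (Real.exp (-c * y ^ q) * Real.exp (2 * Real.log y)) := by rw [h5]; ring
      _ ≤ 4 * Real.exp ((2 / q) * (-1 - Real.log c2)) := by
          rw [← Real.exp_add]
          apply mul_le_mul_of_nonneg_left _ (by norm_num)
          apply Real.exp_le_exp.2
          linarith
      _ ≤ 4 + E := by rw [← hE]; linarith

lemma sum_sq_le {M : ℝ} (hM : 0 < M) (s : ℕ) :
    ∑ j ∈ Finset.range s, 1 / (M + j + 1) ^ 2 ≤ 1 / M - 1 / (M + s) := by
  induction s with
  | zero => simp
  | succ s ih =>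
    rw [Finset.sum_range_succ]
    have hu : 0 < M + s := by positivity
    have key : 1 / (M + s + 1) ^ 2 ≤ 1 / (M + s) - 1 / (M + s + 1) := by
      rw [div_sub_div _ _ hu.ne' (by positivity), div_le_div_iff₀ (by positivity) (by positivity)]
      nlinarith
    push_cast
    rw [← add_assoc]
    linarith

lemma sum_weights {b : ℕ} (hb : 2 ≤ b) (a : ℕ → ℝ) {q c C0 : ℝ} (hq : 0 < q) (hc : 0 < c)
    (hC0 : 0 ≤ C0) (h : ∀ j : ℕ, c * ((j : ℝ) + 1) ^ q - C0 ≤ a j) :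
    ∃ D : ℝ, 0 < D ∧ ∀ t : ℝ, 0 < t → t ≤ 1 → ∀ s : ℕ,
      ∑ j : Fin s, (b : ℝ) ^ (-t * a j) ≤ D * t ^ (-(1 / q)) := by
  have hb1 : (1 : ℝ) < b := by exact_mod_cast (by omega : 1 < b)
  have hLb : 0 < Real.log b := Real.log_pos hb1
  have hb0 : (0 : ℝ) < b := by linarith
  obtain ⟨D, hD, hDy⟩ := polyexp hq (mul_pos hc hLb)
  refine ⟨(b : ℝ) ^ C0 * D, by positivity, fun t ht ht1 s => ?_⟩
  set M := t ^ (-(1 / q)) with hM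
  have hM0 : 0 < M := by positivity
  have hMq : M ^ q = t⁻¹ := by
    rw [hM, ← Real.rpow_mul ht.le, neg_mul, one_div_mul_cancel hq.ne', Real.rpow_neg_one]
  have hterm : ∀ j : ℕ, (b : ℝ) ^ (-t * a j) ≤ (b : ℝ) ^ C0 * D * M ^ 2 * (1 / (M + j + 1) ^ 2) := by
    intro j
    have e1 : (b : ℝ) ^ (-t * a j) ≤ (b : ℝ) ^ (C0 + -(t * (c * ((j : ℝ) + 1) ^ q))) := by
      apply Real.rpow_le_rpow_of_exponent_le hb1.le
      have := mul_le_mul_of_nonneg_left (h j) ht.le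
      nlinarith
    have e2 : (b : ℝ) ^ (-(t * (c * ((j : ℝ) + 1) ^ q))) =
        Real.exp (-(c * Real.log b) * (((j : ℝ) + 1) / M) ^ q) := by
      rw [Real.rpow_def_of_pos hb0, Real.div_rpow (by positivity) hM0.le, hMq]
      congr 1
      field_simp
    rw [Real.rpow_add hb0, e2] at e1
    refine e1.trans ?_
    have e3 := hDy (((j : ℝ) + 1) / M) (by positivity)
    have e4 : D / (1 + ((j : ℝ) + 1) / M) ^ 2 = D * M ^ 2 * (1 / (M + j + 1) ^ 2) := by
      have : 0 < M + j + 1 := by positivity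
      have h5 : 1 + ((j : ℝ) + 1) / M = (M + j + 1) / M := by field_simp; ring
      rw [h5]; field_simp
    rw [e4] at e3
    calc _ ≤ (b : ℝ) ^ C0 * (D * M ^ 2 * (1 / (M + j + 1) ^ 2)) :=
          mul_le_mul_of_nonneg_left e3 (by positivity)
      _ = _ := by ring
  rw [Fin.sum_univ_eq_sum_range (fun j => (b : ℝ) ^ (-t * a j)) s]
  calc ∑ j ∈ Finset.range s, (b : ℝ) ^ (-t * a j)
      ≤ ∑ j ∈ Finset.range s, (b : ℝ) ^ C0 * D * M ^ 2 * (1 / (M + j + 1) ^ 2) :=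
        Finset.sum_le_sum fun j _ => hterm j
    _ = (b : ℝ) ^ C0 * D * M ^ 2 * ∑ j ∈ Finset.range s, 1 / (M + j + 1) ^ 2 := by
        rw [Finset.mul_sum]
    _ ≤ (b : ℝ) ^ C0 * D * M ^ 2 * (1 / M) := by
        apply mul_le_mul_of_nonneg_left _ (by positivity)
        have h1 := sum_sq_le hM0 s
        have h2 : 0 ≤ 1 / (M + s) := by positivity
        linarith
    _ = _ := by field_simp

lemma a_imp_c {b : ℕ} (hb : 2 ≤ b) (a : ℕ → ℝ) (ha : Monotone a)
    (p : ℝ) (hp1 : 1 < p) (hp2 : p < 2)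
    (H : ∃ c : ℝ, 0 < c ∧ ∀ᶠ j : ℕ in Filter.atTop,
        c * ((j : ℝ) + 1) ^ ((p - 1) / (2 - p)) ≤ a j) :
    ∃ C c : ℝ, 0 < C ∧ 0 < c ∧
        ∀ s n : ℕ, 0 < s → 0 < n →
          minErr n s {f | MemW b (fun j : Fin s => a j) f} (normW b (fun j : Fin s => a j)) ≤
            ENNReal.ofReal (C * Real.exp (-c * (Real.log n) ^ p)) := by
  obtain ⟨c0, hc0, hev⟩ := H
  have hb1 : (1 : ℝ) < b := by exact_mod_cast (by omega : 1 < b)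
  have hLb : 0 < Real.log b := Real.log_pos hb1
  have hb0 : (0 : ℝ) < b := by linarith
  have h2p : 0 < 2 - p := by linarith
  have hp10 : 0 < p - 1 := by linarith
  have hp0 : 0 < p := by linarith
  set q := (p - 1) / (2 - p) with hq
  have hq0 : 0 < q := div_pos hp10 h2p
  obtain ⟨N0, hN0⟩ := eventually_atTop.1 hev
  set C0 := |a 0| + c0 * ((N0 : ℝ) + 1) ^ q with hC0
  have hC00 : 0 ≤ C0 := by positivity
  have hlow : ∀ j : ℕ, c0 * ((j : ℝ) + 1) ^ q - C0 ≤ a j := by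
    intro j
    rcases le_total N0 j with h | h
    · linarith [hN0 j h]
    · have h1 : ((j : ℝ) + 1) ^ q ≤ ((N0 : ℝ) + 1) ^ q := by
        apply Real.rpow_le_rpow (by positivity) _ hq0.le
        have : (j : ℝ) ≤ N0 := by exact_mod_cast h
        linarith
      have h2 := mul_le_mul_of_nonneg_left h1 hc0.le
      have h3 := ha (Nat.zero_le j)
      have h4 := neg_abs_le (a 0)
      linarith
  obtain ⟨D, hD, hDs⟩ := sum_weights hb a hq0 hc0 hC00 hlow
  set D2 := b / Real.log b * D with hD2
  have hD20 : 0 < D2 := by positivity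
  set e := 1 / (p - 1) with he
  have he1 : e = 1 + 1 / q := by
    rw [he, hq]; field_simp; ring
  have hwt : ∀ t : ℝ, 0 < t → t ≤ 1 → ∀ s : ℕ, ∀ F : Finset (Fin s → ℕ),
      ∑ k ∈ F, (b : ℝ) ^ (-t * dickWtV b (fun j : Fin s => a j) k) ≤ Real.exp (D2 * t ^ (-e)) := by
    intro t ht ht1 s F
    refine (sum_wt_le hb _ ht F).trans ?_
    apply Real.exp_le_exp.2
    calc _ ≤ b / (t * Real.log b) * (D * t ^ (-(1 / q))) :=
          mul_le_mul_of_nonneg_left (hDs t ht ht1 s) (by positivity)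
      _ = D2 * t ^ (-e) := by
          rw [he1, neg_add, Real.rpow_add ht, Real.rpow_neg_one, hD2]
          field_simp
  set Lc := Real.log b + D2 + 2 with hLc
  have hLc0 : 0 < Lc := by positivity
  set Z := Real.exp (D2 * (1 / 2 : ℝ) ^ (-e)) with hZ
  have hZ0 : 0 < Z := Real.exp_pos _
  set cc := Real.log b / 2 * (Lc ^ p)⁻¹ with hcc
  have hcc0 : 0 < cc := by positivity
  refine ⟨Z + Real.exp (Real.log b / 2), cc, by positivity, hcc0, fun s n _ hn => ?_⟩
  have hlog0 : 0 ≤ Real.log n := Real.log_natCast_nonneg n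
  rcases lt_or_ge (Real.log n) Lc with hlt | hge
  · refine (minErr_le_one hb n s _).trans ?_
    rw [ENNReal.one_le_ofReal]
    have h1 : (Real.log n) ^ p ≤ Lc ^ p := Real.rpow_le_rpow hlog0 hlt.le hp0.le
    have h2 : cc * (Real.log n) ^ p ≤ Real.log b / 2 := by
      calc _ ≤ cc * Lc ^ p := mul_le_mul_of_nonneg_left h1 hcc0.le
        _ = _ := by rw [hcc]; field_simp
    have h3 : 1 ≤ Real.exp (Real.log b / 2) * Real.exp (-cc * (Real.log n) ^ p) := by
      rw [← Real.exp_add]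
      apply Real.one_le_exp
      linarith
    have h4 : 0 < Real.exp (-cc * (Real.log n) ^ p) := Real.exp_pos _
    nlinarith
  · set T := (Real.log n / Lc) ^ p with hT
    have hr1 : 1 ≤ Real.log n / Lc := by rwa [one_le_div hLc0]
    have hT1 : 1 ≤ T := Real.one_le_rpow hr1 hp0.le
    have hT0 : 0 < T := by linarith
    have hTp : T ^ (1 / p) = Real.log n / Lc := by
      rw [hT, ← Real.rpow_mul (by positivity), mul_one_div_cancel hp0.ne', Real.rpow_one]
    set t := T ^ (-((p - 1) / p)) with ht
    have ht0 : 0 < t := by positivity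
    have ht1 : t ≤ 1 := Real.rpow_le_one_of_one_le_of_nonpos hT1 (by
      have : 0 < (p - 1) / p := by positivity
      linarith)
    have htT : t * T = T ^ (1 / p) := by
      rw [ht, ← Real.rpow_add_one hT0.ne']
      congr 1; field_simp; ring
    have hte : t ^ (-e) = T ^ (1 / p) := by
      rw [ht, ← Real.rpow_mul hT0.le, he]
      congr 1; field_simp
    set μ : (Fin s → ℕ) → ℝ := dickWtV b (fun j : Fin s => a j) with hμ
    have hcardF : ∀ F : Finset (Fin s → ℕ), (∀ k ∈ F, μ k ≤ T) →
        (F.card : ℝ) ≤ Real.exp ((Real.log b + D2) * (Real.log n / Lc)) := by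
      intro F hF
      calc (F.card : ℝ) = ∑ k ∈ F, (1 : ℝ) := by simp
        _ ≤ ∑ k ∈ F, (b : ℝ) ^ (t * T) * (b : ℝ) ^ (-t * μ k) := by
          refine Finset.sum_le_sum fun k hk => ?_
          rw [← Real.rpow_add hb0]
          apply Real.one_le_rpow hb1.le
          have := mul_le_mul_of_nonneg_left (hF k hk) ht0.le
          linarith
        _ = (b : ℝ) ^ (t * T) * ∑ k ∈ F, (b : ℝ) ^ (-t * μ k) := by rw [Finset.mul_sum]
        _ ≤ (b : ℝ) ^ (t * T) * Real.exp (D2 * t ^ (-e)) :=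
          mul_le_mul_of_nonneg_left (hwt t ht0 ht1 s F) (by positivity)
        _ = _ := by
          rw [htT, hte, hTp, Real.rpow_def_of_pos hb0, ← Real.exp_add]
          congr 1; ring
    have hfin : {k | μ k ≤ T}.Finite := by
      by_contra hinf
      obtain ⟨m, hm⟩ := exists_nat_gt (Real.exp ((Real.log b + D2) * (Real.log n / Lc)))
      obtain ⟨F, hF1, hF2⟩ := Set.Infinite.exists_subset_card_eq hinf m
      have := hcardF F (fun k hk => hF1 hk)
      rw [hF2] at this
      linarith
    set K := hfin.toFinset with hK
    have hKmem : ∀ k, k ∈ K ↔ μ k ≤ T := by intro k; simp [hK]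
    have hKcard := hcardF K (fun k hk => (hKmem k).1 hk)
    have hKn : 2 * K.card + 1 ≤ n := by
      have h1 : (2 * K.card + 1 : ℝ) ≤ n := by
        set u := Real.log n / Lc with hu
        have hu0 : 0 ≤ u := by linarith
        have h2 : (1 : ℝ) ≤ Real.exp ((Real.log b + D2) * u) := Real.one_le_exp (by positivity)
        have h3 : (3 : ℝ) ≤ Real.exp (2 * u) := by
          have := Real.add_one_le_exp (2 * u); linarith
        have h4 : (n : ℝ) = Real.exp ((Real.log b + D2) * u) * Real.exp (2 * u) := by
          rw [← Real.exp_add, ← add_mul, ← hLc, hu, mul_div_cancel₀ _ hLc0.ne',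
            Real.exp_log (by exact_mod_cast hn)]
        rw [h4]
        nlinarith
      exact_mod_cast h1
    refine (minErr_le hb _ hT0.le (fun F => hwt (1 / 2) (by norm_num) (by norm_num) s F) K hKmem
      hKn).trans ?_
    apply ENNReal.ofReal_le_ofReal
    have h1 : (b : ℝ) ^ (-(T / 2)) = Real.exp (-cc * (Real.log n) ^ p) := by
      rw [Real.rpow_def_of_pos hb0, hT, Real.div_rpow hlog0 hLc0.le, hcc]
      congr 1
      field_simp
    rw [h1, mul_comm]
    apply mul_le_mul_of_nonneg_right _ (Real.exp_pos _).le
    linarith [Real.exp_pos (Real.log b / 2)]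

/-- for `1 < p < 2`, the equivalence of (a) `liminf_j a_j/j^{(p-1)/(2-p)} > 0`,
(b) super-polynomial convergence with factor `exp(A·s)`, and (c) the same without any
dependence on `s`, for integration in the Walsh space `W_{s,a}`.
(The sequence `a` is indexed from `0`, i.e. `a (j-1)` is the paper's `a_j`.) -/
theorem statement2 (b : ℕ) (hb : 2 ≤ b) (a : ℕ → ℝ) (ha : Monotone a)
    (p : ℝ) (hp1 : 1 < p) (hp2 : p < 2) :
    ((∃ c : ℝ, 0 < c ∧ ∀ᶠ j : ℕ in Filter.atTop,
        c * ((j : ℝ) + 1) ^ ((p - 1) / (2 - p)) ≤ a j) ↔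
      (∃ A C c : ℝ, 0 < A ∧ 0 < C ∧ 0 < c ∧
        ∀ s n : ℕ, 0 < s → 0 < n →
          minErr n s {f | MemW b (fun j : Fin s => a j) f} (normW b (fun j : Fin s => a j)) ≤
            ENNReal.ofReal (C * Real.exp (A * s) * Real.exp (-c * (Real.log n) ^ p)))) ∧
    ((∃ A C c : ℝ, 0 < A ∧ 0 < C ∧ 0 < c ∧
        ∀ s n : ℕ, 0 < s → 0 < n →
          minErr n s {f | MemW b (fun j : Fin s => a j) f} (normW b (fun j : Fin s => a j)) ≤
            ENNReal.ofReal (C * Real.exp (A * s) * Real.exp (-c * (Real.log n) ^ p))) ↔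
      (∃ C c : ℝ, 0 < C ∧ 0 < c ∧
        ∀ s n : ℕ, 0 < s → 0 < n →
          minErr n s {f | MemW b (fun j : Fin s => a j) f} (normW b (fun j : Fin s => a j)) ≤
            ENNReal.ofReal (C * Real.exp (-c * (Real.log n) ^ p)))) := by
  have hbc : (∃ C c : ℝ, 0 < C ∧ 0 < c ∧
        ∀ s n : ℕ, 0 < s → 0 < n →
          minErr n s {f | MemW b (fun j : Fin s => a j) f} (normW b (fun j : Fin s => a j)) ≤
            ENNReal.ofReal (C * Real.exp (-c * (Real.log n) ^ p))) →
      (∃ A C c : ℝ, 0 < A ∧ 0 < C ∧ 0 < c ∧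
        ∀ s n : ℕ, 0 < s → 0 < n →
          minErr n s {f | MemW b (fun j : Fin s => a j) f} (normW b (fun j : Fin s => a j)) ≤
            ENNReal.ofReal (C * Real.exp (A * s) * Real.exp (-c * (Real.log n) ^ p))) := by
    rintro ⟨C, c, hC, hc, h⟩
    refine ⟨1, C, c, one_pos, hC, hc, fun s n hs hn => (h s n hs hn).trans ?_⟩
    apply ENNReal.ofReal_le_ofReal
    apply mul_le_mul_of_nonneg_right _ (Real.exp_pos _).le
    apply le_mul_of_one_le_right hC.le
    apply Real.one_le_exp
    positivity
  refine ⟨⟨fun h => hbc (a_imp_c hb a ha p hp1 hp2 h), ?_⟩, ⟨?_, hbc⟩⟩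
  · rintro ⟨A, C, c, hA, hC, hc, h⟩
    exact b_imp_a hb a ha p hp1 hp2 hA hC hc h
  · rintro ⟨A, C, c, hA, hC, hc, h⟩
    exact a_imp_c hb a ha p hp1 hp2 (b_imp_a hb a ha p hp1 hp2 hA hC hc h)

end
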